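/- In the tied braid monoid TB_n^B of type B, one has φ_j σ_i = σ_i φ_{s_i(j)} for all 1 ≤ i ≤ n−1 and all 1 ≤ j ≤ n, where s_i denotes the transposition (i, i+1) acting on {1, …, n}. -/

import Mathlib

/-! The tied braid monoid of type B, `TBₙᴮ`, presented by generators and relations. -/

/-- Generators of the tied braid monoid of type B on `n` (moving) strands:
`sig i` is `σ_{i+1}`, `sigInv i` is `σ_{i+1}⁻¹`, `rho` is `ρ₁`, `rhoInv` is `ρ₁⁻¹`,
`phi` is `φ₁` and `eta i` is `η_{i+1}` (for `i : Fin (n-1)`). -/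
inductive TBGen (n : ℕ) : Type
  | sig : Fin (n - 1) → TBGen n
  | sigInv : Fin (n - 1) → TBGen n
  | rho : TBGen n
  | rhoInv : TBGen n
  | phi : TBGen n
  | eta : Fin (n - 1) → TBGen n

namespace TiedBraidB

variable (n : ℕ)

/-- The word `σᵢ` (for `1 ≤ i ≤ n-1`; junk value `1` otherwise). -/
def wσ (i : ℕ) : FreeMonoid (TBGen n) :=
  if h : 1 ≤ i ∧ i ≤ n - 1 then FreeMonoid.of (TBGen.sig ⟨i - 1, by omega⟩) else 1

/-- The word `σᵢ⁻¹`. -/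
def wσi (i : ℕ) : FreeMonoid (TBGen n) :=
  if h : 1 ≤ i ∧ i ≤ n - 1 then FreeMonoid.of (TBGen.sigInv ⟨i - 1, by omega⟩) else 1

/-- The word `ηᵢ`. -/
def wη (i : ℕ) : FreeMonoid (TBGen n) :=
  if h : 1 ≤ i ∧ i ≤ n - 1 then FreeMonoid.of (TBGen.eta ⟨i - 1, by omega⟩) else 1

/-- The word `ρ₁`. -/
def wρ : FreeMonoid (TBGen n) := FreeMonoid.of TBGen.rho

/-- The word `ρ₁⁻¹`. -/
def wρi : FreeMonoid (TBGen n) := FreeMonoid.of TBGen.rhoInv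

/-- The word `φ₁`. -/
def wφ : FreeMonoid (TBGen n) := FreeMonoid.of TBGen.phi

/-- The descending word `σₖ σₖ₋₁ ⋯ σ₁`. -/
def wσDesc : ℕ → FreeMonoid (TBGen n)
  | 0 => 1
  | k + 1 => wσ n (k + 1) * wσDesc k

/-- The ascending word `σ₁ σ₂ ⋯ σₖ`. -/
def wσAsc : ℕ → FreeMonoid (TBGen n)
  | 0 => 1
  | k + 1 => wσAsc k * wσ n (k + 1)

/-- The descending word `σₖ⁻¹ σₖ₋₁⁻¹ ⋯ σ₁⁻¹`. -/
def wσiDesc : ℕ → FreeMonoid (TBGen n)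
  | 0 => 1
  | k + 1 => wσi n (k + 1) * wσiDesc k

/-- The ascending word `σ₁⁻¹ σ₂⁻¹ ⋯ σₖ⁻¹`. -/
def wσiAsc : ℕ → FreeMonoid (TBGen n)
  | 0 => 1
  | k + 1 => wσiAsc k * wσi n (k + 1)

/-- The defining relations of the tied braid monoid `TBₙᴮ` of type B. -/
inductive tbRel : FreeMonoid (TBGen n) → FreeMonoid (TBGen n) → Prop
  | sig_inv (i : ℕ) (h1 : 1 ≤ i) (h2 : i ≤ n - 1) :
      tbRel (wσ n i * wσi n i) 1
  | inv_sig (i : ℕ) (h1 : 1 ≤ i) (h2 : i ≤ n - 1) :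
      tbRel (wσi n i * wσ n i) 1
  | rho_inv : tbRel (wρ n * wρi n) 1
  | inv_rho : tbRel (wρi n * wρ n) 1
  | sig_comm (i j : ℕ) (h1 : 1 ≤ i) (h2 : i + 1 < j) (h3 : j ≤ n - 1) :
      tbRel (wσ n i * wσ n j) (wσ n j * wσ n i)
  | sig_braid (i : ℕ) (h1 : 1 ≤ i) (h2 : i + 1 ≤ n - 1) :
      tbRel (wσ n i * wσ n (i + 1) * wσ n i) (wσ n (i + 1) * wσ n i * wσ n (i + 1))
  | rho_sig (i : ℕ) (h1 : 2 ≤ i) (h2 : i ≤ n - 1) :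
      tbRel (wρ n * wσ n i) (wσ n i * wρ n)
  | rho_sig_rho_sig (h : 2 ≤ n) :
      tbRel (wρ n * wσ n 1 * wρ n * wσ n 1) (wσ n 1 * wρ n * wσ n 1 * wρ n)
  | eta_comm (i j : ℕ) (h1 : 1 ≤ i) (h2 : i ≤ n - 1) (h3 : 1 ≤ j) (h4 : j ≤ n - 1) :
      tbRel (wη n i * wη n j) (wη n j * wη n i)
  | eta_sig (i : ℕ) (h1 : 1 ≤ i) (h2 : i ≤ n - 1) :
      tbRel (wη n i * wσ n i) (wσ n i * wη n i)
  | eta_sig_far (i j : ℕ) (h1 : 1 ≤ i) (h2 : i ≤ n - 1) (h3 : 1 ≤ j) (h4 : j ≤ n - 1)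
      (h5 : i + 1 < j ∨ j + 1 < i) :
      tbRel (wη n i * wσ n j) (wσ n j * wη n i)
  | eta_sig_sig (i j : ℕ) (h1 : 1 ≤ i) (h2 : i ≤ n - 1) (h3 : 1 ≤ j) (h4 : j ≤ n - 1)
      (h5 : j = i + 1 ∨ i = j + 1) :
      tbRel (wη n i * wσ n j * wσ n i) (wσ n j * wσ n i * wη n j)
  | eta_sig_sigInv (i j : ℕ) (h1 : 1 ≤ i) (h2 : i ≤ n - 1) (h3 : 1 ≤ j) (h4 : j ≤ n - 1)
      (h5 : j = i + 1 ∨ i = j + 1) :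
      tbRel (wη n i * wσ n j * wσi n i) (wσ n j * wσi n i * wη n j)
  | eta_eta_sig (i j : ℕ) (h1 : 1 ≤ i) (h2 : i ≤ n - 1) (h3 : 1 ≤ j) (h4 : j ≤ n - 1)
      (h5 : j = i + 1 ∨ i = j + 1) :
      tbRel (wη n i * wη n j * wσ n i) (wσ n i * wη n i * wη n j)
  | eta_eta_sig' (i j : ℕ) (h1 : 1 ≤ i) (h2 : i ≤ n - 1) (h3 : 1 ≤ j) (h4 : j ≤ n - 1)
      (h5 : j = i + 1 ∨ i = j + 1) :
      tbRel (wη n i * wη n j * wσ n i) (wη n j * wσ n i * wη n j)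
  | eta_idem (i : ℕ) (h1 : 1 ≤ i) (h2 : i ≤ n - 1) :
      tbRel (wη n i * wη n i) (wη n i)
  | phi_idem : tbRel (wφ n * wφ n) (wφ n)
  | rho_eta (i : ℕ) (h1 : 1 ≤ i) (h2 : i ≤ n - 1) :
      tbRel (wρ n * wη n i) (wη n i * wρ n)
  | rho_phi : tbRel (wρ n * wφ n) (wφ n * wρ n)
  | phi_eta (i : ℕ) (h1 : 1 ≤ i) (h2 : i ≤ n - 1) :
      tbRel (wφ n * wη n i) (wη n i * wφ n)
  | phi_sig (i : ℕ) (h1 : 2 ≤ i) (h2 : i ≤ n - 1) :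
      tbRel (wφ n * wσ n i) (wσ n i * wφ n)
  | phi_move (i : ℕ) (h1 : 2 ≤ i) (h2 : i ≤ n) :
      tbRel (wσDesc n (i - 1) * wφ n * wσiAsc n (i - 1))
        (wσiDesc n (i - 1) * wφ n * wσAsc n (i - 1))
  | phi_eta_one (h : 2 ≤ n) :
      tbRel (wφ n * wη n 1) (wφ n * wσ n 1 * wφ n * wσi n 1)
  | phi_eta_one' (h : 2 ≤ n) :
      tbRel (wφ n * wσ n 1 * wφ n * wσi n 1) (wσ n 1 * wφ n * wσi n 1 * wη n 1)

/-- The tied braid monoid of type B on `n` strands. -/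
def TB : Type := (conGen (tbRel n)).Quotient

instance : Monoid (TB n) := inferInstanceAs (Monoid (conGen (tbRel n)).Quotient)

/-- The canonical projection from the free monoid on the generators onto `TBₙᴮ`. -/
def mk : FreeMonoid (TBGen n) →* TB n := Con.mk' _

/-- The generator `σᵢ` of `TBₙᴮ`. -/
def σB (i : ℕ) : TB n := mk n (wσ n i)

/-- The generator `σᵢ⁻¹` of `TBₙᴮ`. -/
def σiB (i : ℕ) : TB n := mk n (wσi n i)

/-- The generator `ρ₁` of `TBₙᴮ`. -/
def ρB : TB n := mk n (wρ n)

/-- The generator `ρ₁⁻¹` of `TBₙᴮ`. -/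
def ρiB : TB n := mk n (wρi n)

/-- The generator `φ₁` of `TBₙᴮ`. -/
def φB : TB n := mk n (wφ n)

/-- The generator `ηᵢ` of `TBₙᴮ`. -/
def ηB (i : ℕ) : TB n := mk n (wη n i)

/-- The word `σᵢ σᵢ₊₁ ⋯ σₖ` (empty if `k < i`). -/
def wσRange (i k : ℕ) : FreeMonoid (TBGen n) :=
  ((List.range' i (k + 1 - i)).map (wσ n)).prod

/-- The word `σₖ⁻¹ σₖ₋₁⁻¹ ⋯ σᵢ⁻¹` (empty if `k < i`). -/
def wσiRangeRev (i k : ℕ) : FreeMonoid (TBGen n) :=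
  ((List.range' i (k + 1 - i)).reverse.map (wσi n)).prod

/-- The word representing the generalized tie `η_{i,j}`:
`σᵢ ⋯ σ_{j-2} η_{j-1} σ_{j-2}⁻¹ ⋯ σᵢ⁻¹` for `i < j`, with the conventions
`η_{i,i} = 1` and `η_{j,i} = η_{i,j}`. -/
def wηg (i j : ℕ) : FreeMonoid (TBGen n) :=
  if i = j then 1
  else wσRange n (min i j) (max i j - 2) * wη n (max i j - 1) *
    wσiRangeRev n (min i j) (max i j - 2)

/-- The word representing the generalized tie `φⱼ = σ_{j-1} ⋯ σ₁ φ₁ σ₁⁻¹ ⋯ σ_{j-1}⁻¹`. -/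
def wφg (j : ℕ) : FreeMonoid (TBGen n) :=
  wσDesc n (j - 1) * wφ n * wσiAsc n (j - 1)

/-- The generalized tie `η_{i,j}` joining the `i`-th and `j`-th moving strands. -/
def ηg (i j : ℕ) : TB n := mk n (wηg n i j)

/-- The generalized tie `φⱼ` joining the fixed strand and the `j`-th moving strand. -/
def φg (j : ℕ) : TB n := mk n (wφg n j)

end TiedBraidB

namespace TiedBraidB

theorem mk_rel {n : ℕ} {a b : FreeMonoid (TBGen n)} (h : tbRel n a b) : mk n a = mk n b :=
  (Con.eq _).2 (ConGen.Rel.of _ _ h)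

theorem σ_σi {n i : ℕ} (h1 : 1 ≤ i) (h2 : i ≤ n - 1) : σB n i * σiB n i = 1 := by
  simpa [σB, σiB] using mk_rel (tbRel.sig_inv i h1 h2)

theorem σi_σ {n i : ℕ} (h1 : 1 ≤ i) (h2 : i ≤ n - 1) : σiB n i * σB n i = 1 := by
  simpa [σB, σiB] using mk_rel (tbRel.inv_sig i h1 h2)

theorem σ_comm {n i j : ℕ} (h1 : 1 ≤ i) (h2 : i + 1 < j) (h3 : j ≤ n - 1) :
    Commute (σB n i) (σB n j) := by
  simpa [commute_iff_eq, σB, σiB] using mk_rel (tbRel.sig_comm i j h1 h2 h3)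

theorem σ_braid {n i : ℕ} (h1 : 1 ≤ i) (h2 : i + 1 ≤ n - 1) :
    σB n i * σB n (i + 1) * σB n i = σB n (i + 1) * σB n i * σB n (i + 1) := by
  simpa [σB, σiB] using mk_rel (tbRel.sig_braid i h1 h2)

/-- An element commuting with `σ` commutes with its inverse. -/
theorem comm_inv {M : Type*} [Monoid M] {x s t : M} (h1 : s * t = 1) (h2 : t * s = 1)
    (h : Commute x s) : Commute x t :=
  Commute.units_inv_right (u := ⟨s, t, h1, h2⟩) h

theorem φg_succ (n k : ℕ) :
    φg n (k + 2) = σB n (k + 1) * φg n (k + 1) * σiB n (k + 1) := by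
  simp [φg, wφg, wσDesc, wσiAsc, σB, σiB, mul_assoc]

theorem φg_alt {n k : ℕ} (h : k + 1 ≤ n) :
    φg n (k + 1) = mk n (wσiDesc n k * wφ n * wσAsc n k) := by
  rcases k with _ | k
  · simp [φg, wφg, wσDesc, wσiAsc, wσiDesc, wσAsc]
  · exact mk_rel (tbRel.phi_move (k + 2) (by omega) h)

theorem φg_succ_alt {n k : ℕ} (h : k + 2 ≤ n) :
    φg n (k + 2) = σiB n (k + 1) * φg n (k + 1) * σB n (k + 1) := by
  rw [φg_alt (k := k + 1) h, φg_alt (k := k) (by omega)]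
  simp [wσiDesc, wσAsc, σB, σiB, mul_assoc]

/-- `σᵢ` commutes with `φ_{k+1}` when `k + 1 < i`. -/
theorem comm_high {n i k : ℕ} (h : k + 1 < i) (h2 : i ≤ n - 1) :
    Commute (σB n i) (φg n (k + 1)) := by
  induction k with
  | zero =>
    have := mk_rel (tbRel.phi_sig i (by omega) h2)
    simpa [commute_iff_eq, φg, wφg, wσDesc, wσiAsc, σB] using this.symm
  | succ k ih =>
    rw [φg_succ]
    have hc : Commute (σB n i) (σB n (k + 1)) := (σ_comm (by omega) (by omega) h2).symm
    exact (hc.mul_right (ih (by omega))).mul_right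
      (comm_inv (σ_σi (by omega) (by omega)) (σi_σ (by omega) (by omega)) hc)

/-- The braid computation in a monoid. -/
theorem braid_aux {M : Type*} [Monoid M] {s t sinv tinv p : M}
    (s1 : s * sinv = 1) (s2 : sinv * s = 1) (t1 : t * tinv = 1) (t2 : tinv * t = 1)
    (hb : s * t * s = t * s * t) (hc : Commute t p) :
    Commute s (t * (s * p * sinv) * tinv) := by
  have h : sinv * tinv * s = t * sinv * tinv := by
    calc sinv * tinv * s = sinv * tinv * (s * t * s) * sinv * tinv := by
          simp only [mul_assoc]; rw [← mul_assoc s sinv, s1, one_mul, t1, mul_one]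
      _ = t * sinv * tinv := by
          rw [hb]; simp only [mul_assoc]
          rw [← mul_assoc tinv t, t2, one_mul, ← mul_assoc sinv s, s2, one_mul]
  calc s * (t * (s * p * sinv) * tinv) = (s * t * s) * p * sinv * tinv := by simp only [mul_assoc]
    _ = t * s * (t * p) * sinv * tinv := by rw [hb]; simp only [mul_assoc]
    _ = t * s * p * (t * sinv * tinv) := by rw [hc.eq]; simp only [mul_assoc]
    _ = t * (s * p * sinv) * tinv * s := by rw [← h]; simp only [mul_assoc]

/-- `σ_{i+1}` commutes with `φ_{i+3+d}`. -/
theorem comm_low {n i d : ℕ} (h : i + d + 3 ≤ n) :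
    Commute (σB n (i + 1)) (φg n (i + d + 3)) := by
  induction d with
  | zero =>
    have e1 := φg_succ n (i + 1)
    rw [φg_succ n i] at e1
    rw [show i + 0 + 3 = i + 1 + 2 by omega, e1]
    exact braid_aux (σ_σi (by omega) (by omega)) (σi_σ (by omega) (by omega))
      (σ_σi (by omega) (by omega)) (σi_σ (by omega) (by omega))
      (σ_braid (by omega) (by omega)) (comm_high (by omega) (by omega))
  | succ d ih =>
    rw [show i + (d + 1) + 3 = (i + d + 2) + 2 by omega, φg_succ]
    have hc : Commute (σB n (i + 1)) (σB n (i + d + 2 + 1)) :=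
      σ_comm (by omega) (by omega) (by omega)
    exact (hc.mul_right (ih (by omega))).mul_right
      (comm_inv (σ_σi (by omega) (by omega)) (σi_σ (by omega) (by omega)) hc)

end TiedBraidB

open TiedBraidB in
/-- In `TBₙᴮ`, one has `φⱼ σᵢ = σᵢ φ_{sᵢ(j)}` for all `1 ≤ i ≤ n-1`
and all `1 ≤ j ≤ n`, where `sᵢ` is the transposition `(i, i+1)` acting on `{1, …, n}`. -/
theorem phi_mul_sigma (n i j : ℕ) (hi1 : 1 ≤ i) (hi2 : i ≤ n - 1)
    (hj1 : 1 ≤ j) (hj2 : j ≤ n) :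
    φg n j * σB n i = σB n i * φg n (if j = i then i + 1 else if j = i + 1 then i else j) := by
  obtain ⟨i, rfl⟩ : ∃ k, i = k + 1 := ⟨i - 1, by omega⟩
  obtain ⟨j, rfl⟩ : ∃ k, j = k + 1 := ⟨j - 1, by omega⟩
  split_ifs with h1 h2
  · obtain rfl : j = i := by omega
    rw [φg_succ_alt (by omega), ← mul_assoc, ← mul_assoc, σ_σi hi1 hi2, one_mul]
  · obtain rfl : j = i + 1 := by omega
    rw [φg_succ, mul_assoc, σi_σ hi1 hi2, mul_one]
  · rcases Nat.lt_or_ge j i with h | h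
    · exact (comm_high (by omega) hi2).symm
    · obtain ⟨d, rfl⟩ : ∃ d, j = i + d + 2 := ⟨j - i - 2, by omega⟩
      exact (comm_low (by omega)).symm
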